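/- Let n ≥ 2 and let c be a nonzero real number, and set R(x) := V_n(x) − c·V_{n−1}(x), where V_k(x) := U_k(x) − U_{k−1}(x). Then: (i) all n complex zeros of R are real and simple, and at most one of them lies outside the open interval (−1, 1); (ii) if −(2n+1)/(2n−1) < c < 1, then all zeros of R lie in (−1, 1); (iii) if c < −(2n+1)/(2n−1), then the smallest zero of R is less than −1; (iv) if c > 1, then the largest zero of R is greater than 1. -/

import Mathlib

open Polynomial

/-!
At the `n - 1` zeros of `V_{n-1}`, all in `(-1, 1)`, the value of `R` is that of `V_n`, whose signs
alternate whatever `c` is. Together with the signs of `R` near `±∞` this gives `n` real zeros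
strictly interlaced by those of `V_{n-1}`, so only the smallest zero can be `≤ -1` and only the
largest can be `≥ 1`. In the factorization of `R(1) = 1 - c` every factor except the one of the
largest zero is positive, so `1 - c` has the sign of `1 - x_max`; in the same way
`(-1)ⁿ R(-1) = (2n + 1) + c (2n - 1)` has the sign of `x_min + 1`.
-/

open Filter

section Alternation

theorem eq_leadingCoeff_mul_prod_X_sub_C {K : Type*} [Field K] {P : K[X]} {n : ℕ}
    (hdeg : P.natDegree ≤ n) {x : Fin n → K} (hx : Function.Injective x)
    (hroot : ∀ i, P.IsRoot (x i)) :
    P = C P.leadingCoeff * ∏ i, (X - C (x i)) := by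
  apply eq_leadingCoeff_mul_of_monic_of_dvd_of_natDegree_le
  · exact monic_prod_X_sub_C x Finset.univ
  · exact Finset.prod_dvd_of_coprime (fun i _ j _ hij => pairwise_coprime_X_sub_C hx hij)
      fun i _ => dvd_iff_isRoot.mpr (hroot i)
  · simpa using hdeg

theorem tendsto_neg_one_pow_natDegree_mul_eval_atBot {𝕜 : Type*} [NormedField 𝕜] [LinearOrder 𝕜]
    [IsStrictOrderedRing 𝕜] [OrderTopology 𝕜] {P : 𝕜[X]} (hdeg : 0 < P.degree)
    (hlead : 0 ≤ P.leadingCoeff) :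
    Tendsto (fun x => (-1) ^ P.natDegree * P.eval x) atBot atTop := by
  set Q : 𝕜[X] := C ((-1) ^ P.natDegree) * P.comp (-X) with hQ
  have hQdeg : Q.degree = P.degree := by
    rw [hQ, degree_C_mul (by simp), degree_comp_neg_X]
  have hQlead : Q.leadingCoeff = P.leadingCoeff := by
    rw [hQ, leadingCoeff_mul, leadingCoeff_C, comp_neg_X_leadingCoeff_eq, ← mul_assoc, ← mul_pow]
    simp
  have hQtop := Q.tendsto_atTop_of_leadingCoeff_nonneg (hQdeg ▸ hdeg) (hQlead ▸ hlead)
  simpa [hQ, Function.comp_def] using hQtop.comp tendsto_neg_atBot_atTop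

theorem mul_neg_of_neg_one_pow_mul_pos {K : Type*} [CommRing K] [LinearOrder K]
    [IsStrictOrderedRing K] {a b : K} {k : ℕ} (ha : 0 < (-1) ^ k * a)
    (hb : 0 < (-1) ^ (k + 1) * b) : a * b < 0 := by
  rcases neg_one_pow_eq_or K k with h | h <;> rw [pow_succ, h] at hb <;> rw [h] at ha <;> nlinarith

variable {P : ℝ[X]}

theorem exists_isRoot_mem_Ioo_of_eval_mul_neg {a b : ℝ} (hab : a < b)
    (h : P.eval a * P.eval b < 0) :
    ∃ z ∈ Set.Ioo a b, P.IsRoot z := by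
  rcases mul_neg_iff.mp h with ⟨ha, hb⟩ | ⟨ha, hb⟩
  · exact intermediate_value_Ioo' hab.le P.continuousOn ⟨hb, ha⟩
  · exact intermediate_value_Ioo hab.le P.continuousOn ⟨ha, hb⟩

theorem exists_factorization_of_sign_changes {n : ℕ} (hdeg : P.natDegree ≤ n)
    {q : Fin (n + 1) → ℝ} (hq : StrictMono q)
    (hsign : ∀ i : Fin n, P.eval (q i.castSucc) * P.eval (q i.succ) < 0) :
    ∃ x : Fin n → ℝ, StrictMono x ∧ P = C P.leadingCoeff * ∏ i, (X - C (x i)) ∧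
      ∀ i, x i ∈ Set.Ioo (q i.castSucc) (q i.succ) := by
  choose x hx hroot using fun i : Fin n =>
    exists_isRoot_mem_Ioo_of_eval_mul_neg (hq i.castSucc_lt_succ) (hsign i)
  have hmono : StrictMono x := fun i j hij => calc
    x i < q i.succ := (hx i).2
    _ ≤ q j.castSucc := hq.monotone (Fin.succ_le_castSucc_iff.mpr hij)
    _ < x j := (hx j).1
  exact ⟨x, hmono, eq_leadingCoeff_mul_prod_X_sub_C hdeg hmono.injective hroot, hx⟩

theorem exists_factorization_interlacing_of_alternating {m : ℕ} (hdeg : P.natDegree = m + 1)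
    (hlead : 0 < P.leadingCoeff) {p : Fin m → ℝ} (hp : StrictMono p)
    (hsign : ∀ i : Fin m, 0 < (-1) ^ (m + (i : ℕ)) * P.eval (p i)) :
    ∃ x : Fin (m + 1) → ℝ, StrictMono x ∧ P = C P.leadingCoeff * ∏ i, (X - C (x i)) ∧
      ∀ i : Fin m, p i ∈ Set.Ioo (x i.castSucc) (x i.succ) := by
  have hdeg' : 0 < P.degree := natDegree_pos_iff_degree_pos.mp (by omega)
  obtain ⟨b, hPb, hpb⟩ := ((P.tendsto_atTop_of_leadingCoeff_nonneg hdeg' hlead.le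
    |>.eventually_gt_atTop 0).and (eventually_all.mpr fun i => eventually_gt_atTop (p i))).exists
  obtain ⟨a, hPa, hap, hab⟩ := ((tendsto_neg_one_pow_natDegree_mul_eval_atBot hdeg' hlead.le
    |>.eventually_gt_atTop 0).and ((eventually_all.mpr fun i => eventually_lt_atBot (p i)).and
      (eventually_lt_atBot b))).exists
  let q : Fin (m + 2) → ℝ := Fin.cons a ((Fin.last m).insertNth b p)
  have hq : StrictMono q := by
    refine Fin.strictMono_cons.mpr ⟨fun j => ?_, (Fin.strictMono_insertNth_iff _ _ _).mpr
      ⟨hp, fun i _ => hpb i, fun i hi => absurd hi i.castSucc_lt_last.not_ge⟩⟩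
    cases j using Fin.lastCases with
    | last => simpa using hab
    | cast j => simpa using hap j
  have hqsign (i : Fin (m + 2)) : 0 < (-1) ^ (m + 1 + (i : ℕ)) * P.eval (q i) := by
    cases i using Fin.cases with
    | zero => simpa [q, hdeg] using hPa
    | succ j =>
      cases j using Fin.lastCases with
      | last => simpa [q, ← two_mul] using hPb
      | cast j => simpa [q, pow_add] using hsign j
  obtain ⟨x, hx, hfac, hxq⟩ := exists_factorization_of_sign_changes hdeg.le hq fun i =>
    mul_neg_of_neg_one_pow_mul_pos (hqsign i.castSucc) (hqsign i.succ)
  refine ⟨x, hx, hfac, fun i => ⟨?_, ?_⟩⟩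
  · simpa [q, ← Fin.succ_castSucc] using (hxq i.castSucc).2
  · simpa [q, ← Fin.succ_castSucc] using (hxq i.succ).1

end Alternation

section SignSub

variable {G : Type*} [AddGroup G] [LinearOrder G] [AddRightMono G] {a b a' b' : G}

theorem lt_iff_lt_of_sign_sub_eq (h : SignType.sign (a - b) = SignType.sign (a' - b')) :
    b < a ↔ b' < a' := by
  rw [← sub_pos, ← sign_eq_one_iff, h, sign_eq_one_iff, sub_pos]

theorem gt_iff_gt_of_sign_sub_eq (h : SignType.sign (a - b) = SignType.sign (a' - b')) :
    a < b ↔ a' < b' := by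
  rw [← sub_neg, ← sign_eq_neg_one_iff, h, sign_eq_neg_one_iff, sub_neg]

end SignSub

section ExtremeRoots

variable {K : Type*} [CommRing K] [LinearOrder K] [IsStrictOrderedRing K] {m : ℕ}
  {x : Fin (m + 1) → K}

theorem sign_prod_sub_eq_sign_sub_last {b : K}
    (hb : ∀ i : Fin m, x i.castSucc < b) :
    SignType.sign (∏ i, (b - x i)) = SignType.sign (b - x (Fin.last m)) := by
  rw [Fin.prod_univ_castSucc, sign_mul,
    sign_pos (Finset.prod_pos fun i _ => sub_pos.mpr (hb i)), one_mul]

theorem sign_prod_sub_eq_sign_first_sub {a : K}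
    (ha : ∀ i : Fin m, a < x i.succ) :
    SignType.sign (∏ i, (x i - a)) = SignType.sign (x 0 - a) := by
  rw [Fin.prod_univ_succ, sign_mul,
    sign_pos (Finset.prod_pos fun i _ => sub_pos.mpr (ha i)), mul_one]

theorem ncard_notMem_Ioo_le_one {α : Type*} [Preorder α] {x : Fin (m + 1) → α} {a b : α}
    (hb : ∀ i : Fin m, x i.castSucc < b) (ha : ∀ i : Fin m, a < x i.succ)
    (h : a < x 0 ∨ x (Fin.last m) < b) :
    Set.ncard {i | x i ∉ Set.Ioo a b} ≤ 1 := by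
  obtain ⟨k, hk⟩ : ∃ k, ∀ i, x i ∉ Set.Ioo a b → i = k := by
    rcases h with h0 | hlast
    · refine ⟨Fin.last m, fun i hi => ?_⟩
      contrapose! hi
      obtain ⟨i, rfl⟩ := Fin.exists_castSucc_eq.mpr hi
      exact ⟨Fin.cases h0 ha i.castSucc, hb i⟩
    · refine ⟨0, fun i hi => ?_⟩
      contrapose! hi
      obtain ⟨i, rfl⟩ := Fin.exists_succ_eq.mpr hi
      exact ⟨ha i, Fin.lastCases hlast hb i.succ⟩
  exact (Set.ncard_le_ncard (t := {k}) hk).trans_eq (Set.ncard_singleton k)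

end ExtremeRoots

section ChebyshevV

variable (R : Type*) [CommRing R]

/-- The Chebyshev polynomial of the third kind `V_k = U_k - U_{k-1}`, indexed by `k : ℤ` like
`Polynomial.Chebyshev.U`. -/
noncomputable def chebyshevV (k : ℤ) : R[X] :=
  Chebyshev.U R k - Chebyshev.U R (k - 1)

theorem chebyshevV_eval_one (k : ℤ) : (chebyshevV R k).eval 1 = 1 := by
  simp [chebyshevV]

theorem chebyshevV_eval_neg_one (k : ℤ) :
    (chebyshevV R k).eval (-1) = k.negOnePow * (2 * k + 1) := by
  simp only [chebyshevV, eval_sub, Chebyshev.U_eval_neg_one, Int.negOnePow_sub, Int.negOnePow_one]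
  push_cast
  ring

section Degree

variable [IsDomain R] [NeZero (2 : R)]

theorem degree_chebyshevU_sub_one_lt (n : ℕ) : (Chebyshev.U R (n - 1)).degree < n := by
  cases n with
  | zero => simp [bot_lt_iff_ne_bot]
  | succ n =>
    rw [Nat.cast_succ, add_sub_cancel_right, Chebyshev.degree_U_natCast]
    exact_mod_cast n.lt_succ_self

theorem degree_chebyshevV (n : ℕ) : (chebyshevV R n).degree = n := by
  rw [chebyshevV, degree_sub_eq_left_of_degree_lt, Chebyshev.degree_U_natCast]
  rw [Chebyshev.degree_U_natCast]
  exact degree_chebyshevU_sub_one_lt R n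

theorem leadingCoeff_chebyshevV (n : ℕ) : (chebyshevV R n).leadingCoeff = 2 ^ n := by
  rw [chebyshevV, leadingCoeff_sub_of_degree_lt, Chebyshev.leadingCoeff_U_natCast]
  rw [Chebyshev.degree_U_natCast]
  exact degree_chebyshevU_sub_one_lt R n

end Degree

theorem chebyshevV_eval_cos_mul_sin (k : ℤ) (θ : ℝ) :
    (chebyshevV ℝ k).eval (Real.cos θ) * Real.sin θ =
      2 * Real.sin (θ / 2) * Real.cos ((k + 1 / 2) * θ) := by
  rw [chebyshevV, eval_sub, sub_mul, Chebyshev.U_real_cos, Chebyshev.U_real_cos, Real.sin_sub_sin]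
  push_cast
  ring_nf

end ChebyshevV

section ChebyshevVRoots

/-- The angle `(2k + 1)π / (2m + 1)` of the zero `cos θ` of `V_m`, with `k = i.rev` counting the
angles from `0` upwards, so that the zeros increase with `i`. -/
noncomputable def chebyshevVAngle (m : ℕ) (i : Fin m) : ℝ :=
  (2 * (i.rev : ℕ) + 1) * Real.pi / (2 * m + 1)

variable {m : ℕ} (i : Fin m)

theorem strictAnti_chebyshevVAngle (m : ℕ) : StrictAnti (chebyshevVAngle m) := by
  intro i j hij
  have hrev : ((j.rev : ℕ) : ℝ) < (i.rev : ℕ) := by exact_mod_cast Fin.rev_strictAnti hij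
  unfold chebyshevVAngle
  gcongr

theorem chebyshevVAngle_mem_Ioo : chebyshevVAngle m i ∈ Set.Ioo 0 Real.pi := by
  refine ⟨by unfold chebyshevVAngle; positivity, ?_⟩
  have hrev : ((i.rev : ℕ) : ℝ) < m := by exact_mod_cast i.rev.is_lt
  rw [chebyshevVAngle, div_lt_iff₀ (by positivity), mul_comm]
  gcongr

theorem add_half_mul_chebyshevVAngle :
    ((m : ℝ) + 1 / 2) * chebyshevVAngle m i = (i.rev : ℕ) * Real.pi + Real.pi / 2 := by
  rw [chebyshevVAngle]
  field_simp

theorem strictMono_cos_chebyshevVAngle (m : ℕ) :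
    StrictMono fun i => Real.cos (chebyshevVAngle m i) := fun i j hij =>
  Real.cos_lt_cos_of_nonneg_of_le_pi (chebyshevVAngle_mem_Ioo j).1.le
    (chebyshevVAngle_mem_Ioo i).2.le (strictAnti_chebyshevVAngle m hij)

end ChebyshevVRoots

section QuasiChebyshevV

/-- The quasi-orthogonal polynomial `V_n - c V_{n-1}` of order one. -/
noncomputable def quasiChebyshevV {R : Type*} [CommRing R] (n : ℤ) (c : R) : R[X] :=
  chebyshevV R n - C c * chebyshevV R (n - 1)

section CommRing

variable {R : Type*} [CommRing R] (c : R)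

theorem quasiChebyshevV_eval_one (n : ℤ) : (quasiChebyshevV n c).eval 1 = 1 - c := by
  simp [quasiChebyshevV, chebyshevV_eval_one]

theorem quasiChebyshevV_eval_neg_one (n : ℤ) :
    (quasiChebyshevV n c).eval (-1) = n.negOnePow * (2 * n + 1 + c * (2 * n - 1)) := by
  simp only [quasiChebyshevV, eval_sub, eval_mul, eval_C, chebyshevV_eval_neg_one,
    Int.negOnePow_sub, Int.negOnePow_one]
  push_cast
  ring

variable [IsDomain R] [NeZero (2 : R)] (m : ℕ)

theorem degree_C_mul_chebyshevV_lt :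
    (C c * chebyshevV R ((m + 1 : ℕ) - 1)).degree < (chebyshevV R (m + 1 : ℕ)).degree := by
  rw [Nat.cast_succ, add_sub_cancel_right, ← Nat.cast_succ, degree_chebyshevV, ← smul_eq_C_mul]
  refine (degree_smul_le c _).trans_lt ?_
  rw [degree_chebyshevV]
  exact_mod_cast m.lt_succ_self

theorem natDegree_quasiChebyshevV : (quasiChebyshevV (m + 1 : ℕ) c).natDegree = m + 1 := by
  apply natDegree_eq_of_degree_eq_some
  rw [quasiChebyshevV, degree_sub_eq_left_of_degree_lt (degree_C_mul_chebyshevV_lt c m),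
    degree_chebyshevV]

theorem leadingCoeff_quasiChebyshevV :
    (quasiChebyshevV (m + 1 : ℕ) c).leadingCoeff = 2 ^ (m + 1) := by
  rw [quasiChebyshevV, leadingCoeff_sub_of_degree_lt (degree_C_mul_chebyshevV_lt c m),
    leadingCoeff_chebyshevV]

end CommRing

variable {m : ℕ} (c : ℝ)

theorem quasiChebyshevV_eval_cos_chebyshevVAngle (i : Fin m) :
    (quasiChebyshevV (m + 1 : ℕ) c).eval (Real.cos (chebyshevVAngle m i)) =
      (-1) ^ ((i.rev : ℕ) + 1) * (2 * Real.sin (chebyshevVAngle m i / 2)) := by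
  set θ := chebyshevVAngle m i
  have hsin : 0 < Real.sin θ := Real.sin_pos_of_mem_Ioo (chebyshevVAngle_mem_Ioo i)
  have hangle := add_half_mul_chebyshevVAngle i
  have cos_zero : Real.cos ((m + 1 / 2) * θ) = 0 := by
    rw [hangle, Real.cos_add_pi_div_two, Real.sin_nat_mul_pi, neg_zero]
  have cos_next : Real.cos ((m + 1 + 1 / 2) * θ) = (-1) ^ ((i.rev : ℕ) + 1) * Real.sin θ := by
    rw [show ((m : ℝ) + 1 + 1 / 2) * θ = (m + 1 / 2) * θ + θ by ring, Real.cos_add, cos_zero,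
      hangle, Real.sin_add_pi_div_two, Real.cos_nat_mul_pi]
    ring
  have hV := chebyshevV_eval_cos_mul_sin m θ
  have hV_next := chebyshevV_eval_cos_mul_sin (m + 1 : ℕ) θ
  push_cast at hV hV_next
  rw [cos_zero] at hV
  rw [cos_next] at hV_next
  apply mul_right_cancel₀ hsin.ne'
  simp only [quasiChebyshevV, eval_sub, eval_mul, eval_C, Nat.cast_succ, add_sub_cancel_right]
  linear_combination hV_next - c * hV

theorem neg_one_pow_mul_quasiChebyshevV_eval_cos_chebyshevVAngle_pos (i : Fin m) :
    0 < (-1) ^ (m + (i : ℕ)) *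
      (quasiChebyshevV (m + 1 : ℕ) c).eval (Real.cos (chebyshevVAngle m i)) := by
  obtain ⟨hpos, hlt⟩ := chebyshevVAngle_mem_Ioo i
  have hsin := Real.sin_pos_of_pos_of_lt_pi (half_pos hpos) ((half_lt_self hpos).trans hlt)
  have heven : Even (m + (i : ℕ) + ((i.rev : ℕ) + 1)) := ⟨m, by rw [Fin.val_rev]; omega⟩
  rw [quasiChebyshevV_eval_cos_chebyshevVAngle, ← mul_assoc, ← pow_add, heven.neg_one_pow]
  positivity

theorem exists_quasiChebyshevV_factorization_inner_mem_Ioo (m : ℕ) (c : ℝ) :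
    ∃ x : Fin (m + 1) → ℝ, StrictMono x ∧
      quasiChebyshevV (m + 1 : ℕ) c = C (2 ^ (m + 1)) * ∏ i, (X - C (x i)) ∧
      (∀ i : Fin m, x i.castSucc < 1) ∧ ∀ i : Fin m, -1 < x i.succ := by
  obtain ⟨x, hx, hfac, hinterlace⟩ := exists_factorization_interlacing_of_alternating
    (natDegree_quasiChebyshevV c m) (by rw [leadingCoeff_quasiChebyshevV]; positivity)
    (strictMono_cos_chebyshevVAngle m)
    (neg_one_pow_mul_quasiChebyshevV_eval_cos_chebyshevVAngle_pos c)
  have hnode (i : Fin m) := Real.mapsTo_cos_Ioo (chebyshevVAngle_mem_Ioo i)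
  rw [leadingCoeff_quasiChebyshevV] at hfac
  exact ⟨x, hx, hfac, fun i => (hinterlace i).1.trans (hnode i).2,
    fun i => (hnode i).1.trans (hinterlace i).2⟩

variable {c} {x : Fin (m + 1) → ℝ}
  (hfac : quasiChebyshevV (m + 1 : ℕ) c = C (2 ^ (m + 1)) * ∏ i, (X - C (x i)))

include hfac

theorem sign_one_sub_last_root (hx : ∀ i : Fin m, x i.castSucc < 1) :
    SignType.sign (1 - x (Fin.last m)) = SignType.sign (1 - c) := by
  rw [← sign_prod_sub_eq_sign_sub_last hx, ← quasiChebyshevV_eval_one c (m + 1 : ℕ), hfac]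
  simp [eval_prod, sign_mul]

theorem two_pow_mul_prod_root_sub_neg_one :
    2 ^ (m + 1) * ∏ i, (x i - -1) = 2 * ((m + 1 : ℕ) : ℝ) + 1 + c * (2 * (m + 1 : ℕ) - 1) := by
  have h := quasiChebyshevV_eval_neg_one c (m + 1 : ℕ)
  have hneg : ∏ i, (-1 - x i) = (-1) ^ (m + 1) * ∏ i, (x i - -1) := by
    simp only [← neg_sub (x _), Finset.prod_neg, Finset.card_univ, Fintype.card_fin]
  simp only [hfac, eval_mul, eval_C, eval_prod, eval_sub, eval_X, hneg,
    Int.cast_natCast, Int.cast_negOnePow_natCast] at h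
  apply mul_left_cancel₀ (pow_ne_zero (m + 1) (neg_ne_zero.mpr (one_ne_zero' ℝ)))
  linear_combination h

theorem sign_first_root_sub_neg_one (hx : ∀ i : Fin m, -1 < x i.succ) :
    SignType.sign (x 0 - -1) = SignType.sign
      (c - -((2 * ((m + 1 : ℕ) : ℝ) + 1) / (2 * ((m + 1 : ℕ) : ℝ) - 1))) := by
  have hden : 0 < 2 * ((m + 1 : ℕ) : ℝ) - 1 := by push_cast; linarith [m.cast_nonneg (α := ℝ)]
  calc SignType.sign (x 0 - -1)
      = SignType.sign (2 ^ (m + 1) * ∏ i, (x i - -1)) := by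
        rw [← sign_prod_sub_eq_sign_first_sub hx, sign_mul,
          sign_pos (pow_pos two_pos (m + 1)), one_mul]
    _ = SignType.sign ((2 * ((m + 1 : ℕ) : ℝ) - 1) *
          (c - -((2 * ((m + 1 : ℕ) : ℝ) + 1) / (2 * ((m + 1 : ℕ) : ℝ) - 1)))) := by
        rw [two_pow_mul_prod_root_sub_neg_one hfac]
        congr 1
        field_simp
        ring
    _ = _ := by rw [sign_mul, sign_pos hden, one_mul]

end QuasiChebyshevV

/-- Zeros of the third-kind Chebyshev quasi-orthogonal polynomial
`R = V_n - c V_{n-1}` of order one (`V_k = U_k - U_{k-1}`):  all `n` complex zeros are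
real and simple, at most one lies outside `(-1,1)`; if `-(2n+1)/(2n-1) < c < 1` all zeros
lie in `(-1,1)`; if `c < -(2n+1)/(2n-1)` the smallest zero is `< -1`; if `c > 1` the
largest zero is `> 1`. -/
theorem chebyshevV_quasiOrthogonal_zeros (n : ℕ) (hn : 2 ≤ n) (c : ℝ) (hc : c ≠ 0)
    (R : Polynomial ℝ)
    (hR : R = (Polynomial.Chebyshev.U ℝ n - Polynomial.Chebyshev.U ℝ ((n : ℤ) - 1))
        - C c * (Polynomial.Chebyshev.U ℝ ((n : ℤ) - 1)
            - Polynomial.Chebyshev.U ℝ ((n : ℤ) - 2))) :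
    ∃ x : Fin n → ℝ, StrictMono x ∧
      R = C ((2 : ℝ) ^ n) * ∏ i : Fin n, (X - C (x i)) ∧
      Set.ncard {i : Fin n | x i ∉ Set.Ioo (-1 : ℝ) 1} ≤ 1 ∧
      ((-((2 * (n : ℝ) + 1) / (2 * (n : ℝ) - 1)) < c ∧ c < 1) →
        ∀ i, x i ∈ Set.Ioo (-1 : ℝ) 1) ∧
      (c < -((2 * (n : ℝ) + 1) / (2 * (n : ℝ) - 1)) → x ⟨0, by omega⟩ < -1) ∧
      (1 < c → 1 < x ⟨n - 1, by omega⟩) := by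
  obtain ⟨m, rfl⟩ := Nat.exists_eq_add_of_le' (show 1 ≤ n by omega)
  have hquasi : R = quasiChebyshevV (m + 1 : ℕ) c := by
    rw [hR, quasiChebyshevV, chebyshevV, chebyshevV, sub_sub ((m + 1 : ℕ) : ℤ), one_add_one_eq_two]
  obtain ⟨x, hx, hfac, hlt, hgt⟩ := exists_quasiChebyshevV_factorization_inner_mem_Ioo m c
  have hsign_last := sign_one_sub_last_root hfac hlt
  have hsign_first := sign_first_root_sub_neg_one hfac hgt
  have hlast_of_lt : c < 1 → x (Fin.last m) < 1 := (lt_iff_lt_of_sign_sub_eq hsign_last).mpr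
  have hfirst_of_gt := (lt_iff_lt_of_sign_sub_eq hsign_first).mpr
  refine ⟨x, hx, hquasi.trans hfac, ncard_notMem_Ioo_le_one hlt hgt ?_, fun ⟨hc_gt, hc_lt⟩ i => ?_,
    (gt_iff_gt_of_sign_sub_eq hsign_first).mpr, (gt_iff_gt_of_sign_sub_eq hsign_last).mpr⟩
  · refine (lt_or_ge c 1).symm.imp (fun hc_ge => hfirst_of_gt ?_) hlast_of_lt
    have hratio : 0 < (2 * ((m + 1 : ℕ) : ℝ) + 1) / (2 * (m + 1 : ℕ) - 1) := by
      push_cast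
      exact div_pos (by positivity) (by linarith [m.cast_nonneg (α := ℝ)])
    linarith
  · exact ⟨Fin.cases (hfirst_of_gt hc_gt) hgt i, Fin.lastCases (hlast_of_lt hc_lt) hlt i⟩
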